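/- Any inclusion of wedges is given by a translation: if W₁ = Λ₁(W_R) + a₁ and W₂ = Λ₂(W_R) + a₂ are wedges in ℝ^d (d ≥ 2, Λ₁, Λ₂ proper Lorentz transformations, a₁, a₂ ∈ ℝ^d) with W₁ ⊆ W₂, then there exists x ∈ closure(Λ₂(W_R)) such that W₁ = W₂ + x. -/

import Mathlib

/-- The Minkowski inner product on `ℝ^(d+2)`:
`⟨x,y⟩ = x₀y₀ - x₁y₁ - ⋯ = 2 x₀ y₀ - ∑ᵢ xᵢ yᵢ`. -/
noncomputable def mink {d : ℕ} (x y : Fin (d + 2) → ℝ) : ℝ :=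
  2 * x 0 * y 0 - ∑ i, x i * y i

/-- The right wedge `W_R = {x : x₁ > |x₀|}`. -/
def WR {d : ℕ} : Set (Fin (d + 2) → ℝ) := {x | |x 0| < x 1}

theorem mink_expand {d : ℕ} (x y : Fin (d + 2) → ℝ) :
    mink x y = x 0 * y 0 - x 1 * y 1 - ∑ i : Fin d, x i.succ.succ * y i.succ.succ := by
  unfold mink
  rw [Fin.sum_univ_succ, Fin.sum_univ_succ]
  simp only [Fin.succ_zero_eq_one]
  ring

/-- The vector `(s, -1, 0, …, 0)`. -/
def nvec (d : ℕ) (s : ℝ) : Fin (d + 2) → ℝ := Fin.cons s (Fin.cons (-1) (fun _ => 0))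

theorem mink_nvec {d : ℕ} (s : ℝ) (x : Fin (d + 2) → ℝ) :
    mink x (nvec d s) = s * x 0 + x 1 := by
  rw [mink_expand]
  have h1 : nvec d s 1 = -1 := rfl
  have h0 : nvec d s 0 = s := rfl
  have h2 : ∀ i : Fin d, nvec d s i.succ.succ = 0 := fun i => rfl
  simp only [h0, h1, h2]
  simp
  ring

theorem mem_WR_iff {d : ℕ} (x : Fin (d + 2) → ℝ) :
    x ∈ WR ↔ 0 < 1 * x 0 + x 1 ∧ 0 < (-1) * x 0 + x 1 := by
  unfold WR
  rw [Set.mem_setOf_eq, abs_lt]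
  constructor
  · rintro ⟨h, h'⟩
    constructor <;> linarith
  · rintro ⟨h, h'⟩
    constructor <;> linarith

theorem nonneg_of_affine (A B : ℝ) (h : ∀ t : ℝ, 0 < t → 0 < t * A + B) : 0 ≤ A := by
  by_contra! hA
  have h2 := h ((|B| + 1) / (-A)) (by have := abs_nonneg B; apply div_pos <;> linarith)
  have h3 : (|B| + 1) / (-A) * A = -(|B| + 1) := by
    have hA0 : A ≠ 0 := hA.ne
    field_simp
  have := le_abs_self B
  linarith

/-- A null vector whose functional is nonnegative on the wedge. -/
theorem null_form {d : ℕ} (p : Fin (d + 2) → ℝ) (hn : mink p p = 0)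
    (hp : ∀ x ∈ WR, 0 ≤ mink x p) :
    (∀ i : Fin d, p i.succ.succ = 0) ∧ 0 ≤ -p 1 ∧ (p 0 = p 1 ∨ p 0 = - p 1) := by
  have key : ∀ (i : Fin d) (s : ℝ), 0 ≤ -p 1 - s * p i.succ.succ := by
    intro i s
    have := hp (Fin.cons 0 (Fin.cons 1 (Pi.single i s))) (by
      rw [mem_WR_iff]
      have h1 : (Fin.cons 0 (Fin.cons 1 (Pi.single i s)) : Fin (d + 2) → ℝ) 1 = 1 := rfl
      have h0 : (Fin.cons 0 (Fin.cons 1 (Pi.single i s)) : Fin (d + 2) → ℝ) 0 = 0 := rfl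
      rw [h0, h1]; norm_num)
    rw [mink_expand] at this
    have h1 : (Fin.cons 0 (Fin.cons 1 (Pi.single i s)) : Fin (d + 2) → ℝ) 1 = 1 := rfl
    have h0 : (Fin.cons 0 (Fin.cons 1 (Pi.single i s)) : Fin (d + 2) → ℝ) 0 = 0 := rfl
    rw [h0, h1] at this
    simpa [Pi.single_apply] using this
  have hz : ∀ i : Fin d, p i.succ.succ = 0 := by
    intro i
    by_contra h
    have := key i ((1 - p 1) / p i.succ.succ)
    rw [div_mul_cancel₀ _ h] at this
    linarith
  refine ⟨hz, ?_, ?_⟩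
  · have := hp (-nvec d 0) (by
      rw [mem_WR_iff]
      have h1 : (-nvec d 0) 1 = - -1 := rfl
      have h0 : (-nvec d 0) 0 = - 0 := rfl
      rw [h0, h1]; norm_num)
    rw [mink_expand] at this
    have h1 : (-nvec d 0) 1 = - -1 := rfl
    have h0 : (-nvec d 0) 0 = - 0 := rfl
    rw [h0, h1] at this
    simp [hz] at this
    linarith
  · rw [mink_expand] at hn
    simp [hz] at hn
    exact mul_self_eq_mul_self_iff.1 (by linarith)

theorem wedge_iff {d : ℕ} (M : (Fin (d + 2) → ℝ) ≃ₗ[ℝ] (Fin (d + 2) → ℝ))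
    (hM : ∀ x y, mink (M x) (M y) = mink x y) (b : Fin (d + 2) → ℝ)
    (h : ∀ w ∈ WR, M w + b ∈ WR) (w : Fin (d + 2) → ℝ) : M w ∈ WR ↔ w ∈ WR := by
  have adj : ∀ s x, mink x (M.symm (nvec d s)) = s * M x 0 + M x 1 := by
    intro s x
    rw [← mink_nvec, ← hM, M.apply_symm_apply]
  have hsymm : ∀ x y, mink (M.symm x) (M.symm y) = mink x y := by
    intro x y
    rw [← hM, M.apply_symm_apply, M.apply_symm_apply]
  have nn : ∀ s : ℝ, (s = 1 ∨ s = -1) → ∀ x ∈ WR, 0 ≤ mink x (M.symm (nvec d s)) := by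
    intro s hs x hx
    rw [adj]
    apply nonneg_of_affine _ (s * b 0 + b 1)
    intro t ht
    have hx' : t • x ∈ WR := by
      rw [mem_WR_iff] at hx ⊢
      simp only [Pi.smul_apply, smul_eq_mul]
      constructor <;> nlinarith [mul_pos ht hx.1, mul_pos ht hx.2]
    have h3 := (mem_WR_iff _).1 (h _ hx')
    simp only [map_smul, Pi.add_apply, Pi.smul_apply, smul_eq_mul] at h3
    rcases hs with rfl | rfl
    · linarith [h3.1]
    · linarith [h3.2]
  have null : ∀ s : ℝ, (s = 1 ∨ s = -1) → 
      mink (M.symm (nvec d s)) (M.symm (nvec d s)) = 0 := by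
    intro s hs
    rw [hsymm, mink_nvec]
    have h1 : nvec d s 1 = -1 := rfl
    have h0 : nvec d s 0 = s := rfl
    rw [h0, h1]
    rcases hs with rfl | rfl <;> norm_num
  obtain ⟨p2, p1, p0⟩ := null_form _ (null 1 (Or.inl rfl)) (nn 1 (Or.inl rfl))
  obtain ⟨q2, q1, q0⟩ := null_form _ (null (-1) (Or.inr rfl)) (nn (-1) (Or.inr rfl))
  have pq : mink (M.symm (nvec d 1)) (M.symm (nvec d (-1))) = -2 := by
    rw [hsymm, mink_nvec]
    have h1 : nvec d 1 1 = -1 := rfl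
    have h0 : nvec d 1 0 = 1 := rfl
    rw [h0, h1]; norm_num
  have ep := adj 1 w
  have eq := adj (-1) w
  rw [mem_WR_iff, mem_WR_iff, ← ep, ← eq]
  rw [mink_expand] at pq
  rw [mink_expand, mink_expand]
  simp only [p2, q2, mul_zero, Finset.sum_const_zero, sub_zero] at pq ⊢
  generalize M.symm (nvec d 1) = p at *
  generalize M.symm (nvec d (-1)) = q at *
  have hne : p 1 * q 1 ≠ 0 := by
    intro h0
    rcases p0 with p0 | p0 <;> rcases q0 with q0 | q0 <;> rw [p0, q0] at pq <;> linarith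
  have pp : 0 < - p 1 := lt_of_le_of_ne p1 (by intro h0; apply hne; rw [show p 1 = 0 by linarith]; simp)
  have qp : 0 < - q 1 := lt_of_le_of_ne q1 (by intro h0; apply hne; rw [show q 1 = 0 by linarith]; simp)
  rcases p0 with p0 | p0 <;> rcases q0 with q0 | q0 <;> rw [p0, q0] at pq ⊢
  · linarith
  · rw [show w 0 * p 1 - w 1 * p 1 = (-p 1) * ((-1) * w 0 + w 1) by ring,
      show w 0 * (-q 1) - w 1 * q 1 = (-q 1) * (1 * w 0 + w 1) by ring,
      mul_pos_iff_of_pos_left pp, mul_pos_iff_of_pos_left qp, and_comm]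
  · rw [show w 0 * (-p 1) - w 1 * p 1 = (-p 1) * (1 * w 0 + w 1) by ring,
      show w 0 * q 1 - w 1 * q 1 = (-q 1) * ((-1) * w 0 + w 1) by ring,
      mul_pos_iff_of_pos_left pp, mul_pos_iff_of_pos_left qp]
  · linarith

/-- any inclusion of wedges `W₁ = Λ₁(W_R) + a₁ ⊆ W₂ = Λ₂(W_R) + a₂` is given by a
translation: there is `x ∈ closure (Λ₂(W_R))` with `W₁ = W₂ + x`. -/
theorem wedge_inclusion_is_translation (d : ℕ)
    (Λ₁ Λ₂ : (Fin (d + 2) → ℝ) →ₗ[ℝ] (Fin (d + 2) → ℝ))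
    (h₁bij : Function.Bijective Λ₁)
    (h₁mink : ∀ x y, mink (Λ₁ x) (Λ₁ y) = mink x y)
    (h₁det : LinearMap.det Λ₁ = 1)
    (h₂bij : Function.Bijective Λ₂)
    (h₂mink : ∀ x y, mink (Λ₂ x) (Λ₂ y) = mink x y)
    (h₂det : LinearMap.det Λ₂ = 1)
    (a₁ a₂ : Fin (d + 2) → ℝ)
    (hsub : (fun w => Λ₁ w + a₁) '' WR ⊆ (fun w => Λ₂ w + a₂) '' WR) :
    ∃ x ∈ closure ((⇑Λ₂) '' WR),
      (fun w => Λ₁ w + a₁) '' WR = (fun w => w + x) '' ((fun w => Λ₂ w + a₂) '' WR) := by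
  have hsub' : ∀ w ∈ WR, ∃ v ∈ WR, Λ₂ v = Λ₁ w + (a₁ - a₂) := by
    intro w hw
    obtain ⟨v, hv, e⟩ := hsub ⟨w, hw, rfl⟩
    refine ⟨v, hv, ?_⟩
    simp only at e
    rw [← add_sub_assoc, ← e, add_sub_cancel_right]
  let E₁ := LinearEquiv.ofBijective Λ₁ h₁bij
  let E₂ := LinearEquiv.ofBijective Λ₂ h₂bij
  have e₁ : ∀ w, E₁ w = Λ₁ w := fun w => rfl
  have e₂ : ∀ w, E₂ w = Λ₂ w := fun w => rfl
  have e₂s : ∀ w, Λ₂ (E₂.symm w) = w := fun w => E₂.apply_symm_apply w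
  have e₁s : ∀ w, Λ₁ (E₁.symm w) = w := fun w => E₁.apply_symm_apply w
  have key := wedge_iff (E₁.trans E₂.symm) (by
    intro x y
    simp only [LinearEquiv.trans_apply]
    rw [← h₂mink, e₂s, e₂s, e₁, e₁, h₁mink]) (E₂.symm (a₁ - a₂)) (by
    intro w hw
    obtain ⟨v, hv, e⟩ := hsub' w hw
    rw [LinearEquiv.trans_apply, ← map_add, e₁, ← e, ← e₂, E₂.symm_apply_apply]
    exact hv)
  refine ⟨a₁ - a₂, ?_, ?_⟩
  · let u : Fin (d + 2) → ℝ := -nvec d 0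
    have hu : ∀ t : ℝ, 0 < t → t • u ∈ WR := by
      intro t ht
      rw [mem_WR_iff]
      have h1 : (t • u) 1 = t * - -1 := rfl
      have h0 : (t • u) 0 = t * - 0 := rfl
      rw [h0, h1]
      constructor <;> linarith
    have hc : Continuous (fun t : ℝ => t • Λ₁ u + (a₁ - a₂)) := by fun_prop
    have ht : Filter.Tendsto (fun t : ℝ => t • Λ₁ u + (a₁ - a₂)) (nhdsWithin 0 (Set.Ioi 0))
        (nhds (a₁ - a₂)) := by
      have := (hc.tendsto 0).mono_left (nhdsWithin_le_nhds (s := Set.Ioi 0))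
      simpa using this
    refine mem_closure_of_tendsto ht ?_
    filter_upwards [self_mem_nhdsWithin] with t ht
    obtain ⟨v, hv, e⟩ := hsub' _ (hu t ht)
    exact ⟨v, hv, by rw [e, map_smul]⟩
  · ext z
    constructor
    · rintro ⟨w, hw, rfl⟩
      refine ⟨_, ⟨_, (key w).2 hw, rfl⟩, ?_⟩
      simp only [LinearEquiv.trans_apply, e₂s, e₁]
      abel
    · rintro ⟨_, ⟨w, hw, rfl⟩, rfl⟩
      refine ⟨E₁.symm (Λ₂ w), (key _).1 ?_, ?_⟩
      · rw [LinearEquiv.trans_apply, E₁.apply_symm_apply, ← e₂, E₂.symm_apply_apply]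
        exact hw
      · simp only [e₁s]
        abel
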